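/- Suppose (λ^m)ₘ ⊆ ℓ¹, U ∈ L(X), U ≠ 0, and ‖T_{λ^m} − U‖ → 0 as m → ∞. Writing λ^m = (λₖ^m)ₖ, there exists k₀ ∈ ℕ such that: (A3) for each k ∈ ℕ the sequence (λₖ^m)ₘ converges in 𝕂; (B3) lim_{m→∞} |λ_{k₀}^m| > 0 and lim_{m→∞} λₖ^m = 0 for every k < k₀; and (C3) ‖Σ_{k=k₀}^∞ λₖ^m·B_wᵏ − U‖ → 0 as m → ∞. -/

import Mathlib

open Filter Topology
open scoped ENNReal

instance : Fact ((1 : ℝ≥0∞) ≤ 1) := ⟨le_rfl⟩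

/-!
Both the convergence of the coefficients and the choice of `k₀` rest on two properties of a
weighted backward shift `B`: it is not nilpotent, and the vectors killed by some power of `B` are
dense. Consequently, for every `k` some `y` satisfies `B ^ (k + 1) y ≠ 0` and `B ^ (k + 2) y = 0`.
On such a `y` the series `∑ j, c j • B ^ (j + 1)` reduces to its first `k + 1` terms, so once
`c 0, …, c (k - 1)` are known to converge, so does `c k`. If every limit were zero, the same
truncation would show that the limit operator vanishes on a dense subspace. Hence there is a first
nonzero limit, and the finitely many terms before it tend to zero in norm.
-/

theorem exists_pow_apply_ne_zero_and_pow_succ_apply_eq_zero {R M : Type*} [Semiring R]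
    [AddCommMonoid M] [Module R M] {f : Module.End R M} {z : M} {k N : ℕ}
    (hk : (f ^ k) z ≠ 0) (hN : (f ^ N) z = 0) :
    ∃ y, (f ^ k) y ≠ 0 ∧ (f ^ (k + 1)) y = 0 := by
  induction N generalizing z with
  | zero => exact absurd (by simpa using congrArg (f ^ k) hN) hk
  | succ N ih =>
    by_cases h : (f ^ (k + 1)) z = 0
    · exact ⟨z, hk, h⟩
    · exact ih (z := f z) (by rwa [pow_succ] at h) (by rwa [pow_succ] at hN)

/-- `f` acts on the sequence `x` as the backward shift with weights `w`: the paper's `B_w`, with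
indices starting at `0`. Nothing is said about `f` off the span of `x`. -/
structure IsWeightedBackwardShift {R M : Type*} [Semiring R] [AddCommMonoid M] [Module R M]
    (f : Module.End R M) (x : ℕ → M) (w : ℕ → R) : Prop where
  apply_zero : f (x 0) = 0
  apply_succ : ∀ n, f (x (n + 1)) = w n • x n

namespace IsWeightedBackwardShift

section Semiring

variable {R M : Type*} [Semiring R] [AddCommMonoid M] [Module R M]
  {f : Module.End R M} {x : ℕ → M} {w : ℕ → R}

theorem of_biorthogonal [TopologicalSpace M] {φ : ℕ → M → R}
    (hφ : ∀ m n, φ m (x n) = if m = n then 1 else 0)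
    (hf : ∀ z, f z = ∑' n, (w n * φ (n + 1) z) • x n) : IsWeightedBackwardShift f x w where
  apply_zero := by simp [hf, hφ]
  apply_succ n := by
    rw [hf, tsum_eq_single n fun k hk ↦ by simp [hφ, hk]]
    simp [hφ]

theorem pow_succ_apply_eq_zero (hf : IsWeightedBackwardShift f x w) (n : ℕ) :
    (f ^ (n + 1)) (x n) = 0 := by
  induction n with
  | zero => simpa using hf.apply_zero
  | succ n ih => rw [pow_succ, Module.End.mul_apply, hf.apply_succ, map_smul, ih, smul_zero]

end Semiring

section CommSemiring

variable {R M : Type*} [CommSemiring R] [AddCommMonoid M] [Module R M]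
  {f : Module.End R M} {x : ℕ → M} {w : ℕ → R}

theorem pow_apply_self (hf : IsWeightedBackwardShift f x w) (n : ℕ) :
    (f ^ n) (x n) = (∏ i ∈ Finset.range n, w i) • x 0 := by
  induction n with
  | zero => simp
  | succ n ih =>
    rw [pow_succ, Module.End.mul_apply, hf.apply_succ, map_smul, ih, smul_smul,
      Finset.prod_range_succ_comm]

end CommSemiring

section CommRing

variable {R M : Type*} [CommRing R] [AddCommGroup M] [Module R M]
  {f : Module.End R M} {x : ℕ → M} {w : ℕ → R}

theorem not_isNilpotent [IsDomain R] [Module.IsTorsionFree R M]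
    (hf : IsWeightedBackwardShift f x w) (hw : ∀ n, w n ≠ 0) (hx : x 0 ≠ 0) : ¬IsNilpotent f := by
  rintro ⟨n, hn⟩
  have hprod : ∏ i ∈ Finset.range n, w i ≠ 0 := Finset.prod_ne_zero_iff.mpr fun i _ ↦ hw i
  exact smul_ne_zero hprod hx (by rw [← hf.pow_apply_self, hn, LinearMap.zero_apply])

theorem span_le_maxGenEigenspace_zero (hf : IsWeightedBackwardShift f x w) :
    Submodule.span R (Set.range x) ≤ f.maxGenEigenspace 0 := by
  rw [Submodule.span_le]
  rintro _ ⟨n, rfl⟩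
  exact (f.mem_maxGenEigenspace 0 _).mpr
    ⟨n + 1, by simpa only [zero_smul, sub_zero] using hf.pow_succ_apply_eq_zero n⟩

end CommRing

end IsWeightedBackwardShift

theorem opNorm_le_of_apply_eq_tsum {𝕜 X : Type*} [NontriviallyNormedField 𝕜]
    [NormedAddCommGroup X] [NormedSpace 𝕜 X] {x : ℕ → X} {B : X →L[𝕜] X} {φ : ℕ → X →L[𝕜] 𝕜}
    {w : ℕ → 𝕜} {C : ℝ} (hx : ∀ n, ‖x n‖ ≤ 1) (hφ : ∀ n, ‖φ n‖ ≤ C) (hw : Summable fun n ↦ ‖w n‖)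
    (hB : ∀ z, B z = ∑' n, (w n * φ n z) • x n) : ‖B‖ ≤ (∑' n, ‖w n‖) * C := by
  have hC : 0 ≤ C := (norm_nonneg _).trans (hφ 0)
  refine B.opNorm_le_bound (mul_nonneg (tsum_nonneg fun _ ↦ norm_nonneg _) hC) fun z ↦ ?_
  have hterm : ∀ n, ‖(w n * φ n z) • x n‖ ≤ ‖w n‖ * (C * ‖z‖) := fun n ↦ calc
    ‖(w n * φ n z) • x n‖ = ‖w n‖ * ‖φ n z‖ * ‖x n‖ := by rw [norm_smul, norm_mul]
    _ ≤ ‖w n‖ * ‖φ n z‖ := mul_le_of_le_one_right (by positivity) (hx n)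
    _ ≤ ‖w n‖ * (C * ‖z‖) := by gcongr; exact (φ n).le_of_opNorm_le (hφ n) z
  rw [hB, mul_assoc, ← tsum_mul_right]
  exact tsum_of_norm_bounded (hw.mul_right _).hasSum hterm

theorem summable_smul_pow_succ {𝕜 A : Type*} [NormedField 𝕜] [NormedRing A] [NormedAlgebra 𝕜 A]
    [CompleteSpace A] {c : ℕ → 𝕜} {b : A} (hc : Summable fun k ↦ ‖c k‖) (hb : ‖b‖ ≤ 1) :
    Summable fun k ↦ c k • b ^ (k + 1) := by
  refine Summable.of_norm_bounded hc fun k ↦ ?_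
  have hpow : ‖b ^ (k + 1)‖ ≤ 1 :=
    (norm_pow_le' b k.succ_pos).trans (pow_le_one₀ (norm_nonneg b) hb)
  exact (norm_smul_le _ _).trans (mul_le_of_le_one_right (norm_nonneg _) hpow)

theorem tendsto_tsum_nat_add {ι E : Type*} {l : Filter ι} [AddCommGroup E] [TopologicalSpace E]
    [IsTopologicalAddGroup E] [T2Space E] {f : ι → ℕ → E} {a : E} {k₀ : ℕ}
    (hf : ∀ i, Summable (f i)) (hhead : ∀ k < k₀, Tendsto (f · k) l (𝓝 0))
    (hsum : Tendsto (fun i ↦ ∑' k, f i k) l (𝓝 a)) :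
    Tendsto (fun i ↦ ∑' k, f i (k + k₀)) l (𝓝 a) := by
  have hhead_sum : Tendsto (fun i ↦ ∑ k ∈ Finset.range k₀, f i k) l (𝓝 0) := by
    simpa only [Finset.sum_const_zero] using
      tendsto_finsetSum _ fun k hk ↦ hhead k (Finset.mem_range.mp hk)
  simpa only [← (hf _).sum_add_tsum_nat_add k₀, add_sub_cancel_left, sub_zero] using
    hsum.sub hhead_sum

theorem exists_tendsto_of_tendsto_smul_const {ι 𝕜 E : Type*} {l : Filter ι} [l.NeBot]
    [NontriviallyNormedField 𝕜] [CompleteSpace 𝕜] [AddCommGroup E] [TopologicalSpace E]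
    [IsTopologicalAddGroup E] [T2Space E] [Module 𝕜 E] [ContinuousSMul 𝕜 E]
    {c : ι → 𝕜} {v u : E} (hv : v ≠ 0) (h : Tendsto (fun i ↦ c i • v) l (𝓝 u)) :
    ∃ a, Tendsto c l (𝓝 a) := by
  have hemb := isClosedEmbedding_smul_left (𝕜 := 𝕜) hv
  obtain ⟨a, rfl⟩ : u ∈ Set.range fun a : 𝕜 ↦ a • v :=
    hemb.isClosed_range.mem_of_tendsto h (Eventually.of_forall fun i ↦ ⟨c i, rfl⟩)
  exact ⟨a, hemb.tendsto_nhds_iff.mpr h⟩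

section OperatorSeries

variable {𝕜 X : Type*} [NontriviallyNormedField 𝕜] [NormedAddCommGroup X] [NormedSpace 𝕜 X]
  {B : X →L[𝕜] X}

theorem mem_maxGenEigenspace_zero_iff {z : X} :
    z ∈ Module.End.maxGenEigenspace (B : X →ₗ[𝕜] X) 0 ↔ ∃ n, (B ^ n) z = 0 := by
  simp only [Module.End.mem_maxGenEigenspace, zero_smul, sub_zero,
    ← ContinuousLinearMap.toLinearMap_pow, ContinuousLinearMap.coe_coe]

theorem exists_pow_apply_ne_zero_of_dense_maxGenEigenspace
    (hdense : Dense (Module.End.maxGenEigenspace (B : X →ₗ[𝕜] X) 0 : Set X))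
    (hnil : ¬IsNilpotent B) (k : ℕ) : ∃ y, (B ^ k) y ≠ 0 ∧ (B ^ (k + 1)) y = 0 := by
  obtain ⟨z, hz, hkz⟩ :
      ∃ z ∈ Module.End.maxGenEigenspace (B : X →ₗ[𝕜] X) 0, (B ^ k) z ≠ 0 := by
    by_contra! hzero
    have hpow : ⇑(B ^ k) = 0 := (B ^ k).continuous.ext_on hdense continuous_zero hzero
    exact hnil ⟨k, DFunLike.coe_injective hpow⟩
  obtain ⟨N, hN⟩ := mem_maxGenEigenspace_zero_iff.mp hz
  simp only [← ContinuousLinearMap.coe_coe, ContinuousLinearMap.toLinearMap_pow] at hkz hN ⊢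
  exact exists_pow_apply_ne_zero_and_pow_succ_apply_eq_zero hkz hN

theorem tsum_smul_pow_succ_apply_eq_sum {c : ℕ → 𝕜} {z : X} {n : ℕ}
    (hc : Summable fun k ↦ c k • B ^ (k + 1)) (hz : (B ^ (n + 1)) z = 0) :
    (∑' k, c k • B ^ (k + 1)) z = ∑ k ∈ Finset.range n, c k • (B ^ (k + 1)) z := by
  have hvanish : ∀ k ∉ Finset.range n, c k • (B ^ (k + 1)) z = 0 := fun k hk ↦ by
    obtain ⟨j, rfl⟩ := Nat.exists_eq_add_of_le' (not_lt.mp (Finset.mem_range.not.mp hk))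
    rw [add_assoc, pow_add, mul_apply_eq_comp, hz, map_zero, smul_zero]
  calc
    (∑' k, c k • B ^ (k + 1)) z = ∑' k, c k • (B ^ (k + 1)) z :=
      (ContinuousLinearMap.apply 𝕜 X z).map_tsum hc
    _ = ∑ k ∈ Finset.range n, c k • (B ^ (k + 1)) z := tsum_eq_sum hvanish

variable {ι : Type*} {l : Filter ι} {c : ι → ℕ → 𝕜} {U : X →L[𝕜] X}

theorem tendsto_sum_smul_pow_succ_apply {z : X} {n : ℕ}
    (hc : ∀ i, Summable fun k ↦ c i k • B ^ (k + 1))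
    (hU : Tendsto (fun i ↦ ∑' k, c i k • B ^ (k + 1)) l (𝓝 U)) (hz : (B ^ (n + 1)) z = 0) :
    Tendsto (fun i ↦ ∑ k ∈ Finset.range n, c i k • (B ^ (k + 1)) z) l (𝓝 (U z)) := by
  simpa only [tsum_smul_pow_succ_apply_eq_sum (hc _) hz] using hU.eval_const z

variable [l.NeBot]

theorem exists_tendsto_coeff_of_tendsto_tsum [CompleteSpace 𝕜]
    (hdense : Dense (Module.End.maxGenEigenspace (B : X →ₗ[𝕜] X) 0 : Set X))
    (hnil : ¬IsNilpotent B)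
    (hc : ∀ i, Summable fun k ↦ c i k • B ^ (k + 1))
    (hU : Tendsto (fun i ↦ ∑' k, c i k • B ^ (k + 1)) l (𝓝 U)) (k : ℕ) :
    ∃ a, Tendsto (c · k) l (𝓝 a) := by
  induction k using Nat.strong_induction_on with
  | _ k ih =>
    choose! a ha using ih
    obtain ⟨y, hy, hy'⟩ :=
      exists_pow_apply_ne_zero_of_dense_maxGenEigenspace hdense hnil (k + 1)
    have hUy := tendsto_sum_smul_pow_succ_apply hc hU hy'
    have hhead : Tendsto (fun i ↦ ∑ j ∈ Finset.range k, c i j • (B ^ (j + 1)) y) l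
        (𝓝 (∑ j ∈ Finset.range k, a j • (B ^ (j + 1)) y)) :=
      tendsto_finsetSum _ fun j hj ↦ (ha j (Finset.mem_range.mp hj)).smul_const _
    refine exists_tendsto_of_tendsto_smul_const hy ((hUy.sub hhead).congr fun i ↦ ?_)
    rw [Finset.sum_range_succ, add_sub_cancel_left]

theorem eq_zero_of_tendsto_tsum_of_tendsto_coeff_zero
    (hdense : Dense (Module.End.maxGenEigenspace (B : X →ₗ[𝕜] X) 0 : Set X))
    (hc : ∀ i, Summable fun k ↦ c i k • B ^ (k + 1))
    (hU : Tendsto (fun i ↦ ∑' k, c i k • B ^ (k + 1)) l (𝓝 U))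
    (hzero : ∀ k, Tendsto (c · k) l (𝓝 0)) : U = 0 := by
  have hUz : ∀ z ∈ Module.End.maxGenEigenspace (B : X →ₗ[𝕜] X) 0, U z = 0 := by
    intro z hz
    obtain ⟨n, hn⟩ := mem_maxGenEigenspace_zero_iff.mp hz
    have hn' : (B ^ (n + 1)) z = 0 := by rw [pow_succ', mul_apply_eq_comp, hn, map_zero]
    have hsum : Tendsto (fun i ↦ ∑ k ∈ Finset.range n, c i k • (B ^ (k + 1)) z) l (𝓝 0) := by
      simpa only [zero_smul, Finset.sum_const_zero] using
        tendsto_finsetSum (Finset.range n) fun k _ ↦ (hzero k).smul_const ((B ^ (k + 1)) z)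
    exact tendsto_nhds_unique (tendsto_sum_smul_pow_succ_apply hc hU hn') hsum
  exact DFunLike.coe_injective (U.continuous.ext_on hdense continuous_zero hUz)

theorem exists_first_nonvanishing_limit_coefficient_general [CompleteSpace 𝕜]
    (hdense : Dense (Module.End.maxGenEigenspace (B : X →ₗ[𝕜] X) 0 : Set X))
    (hnil : ¬IsNilpotent B)
    (hc : ∀ i, Summable fun k ↦ c i k • B ^ (k + 1)) (hU : U ≠ 0)
    (hconv : Tendsto (fun i ↦ ‖(∑' k, c i k • B ^ (k + 1)) - U‖) l (𝓝 0)) :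
    ∃ k₀ : ℕ,
      (∀ k, ∃ a, Tendsto (c · k) l (𝓝 a)) ∧
      ((∃ r : ℝ, 0 < r ∧ Tendsto (fun i ↦ ‖c i k₀‖) l (𝓝 r)) ∧
        ∀ k < k₀, Tendsto (c · k) l (𝓝 0)) ∧
      Tendsto (fun i ↦ ‖(∑' k, c i (k₀ + k) • B ^ (k₀ + k + 1)) - U‖) l (𝓝 0) := by
  classical
  rw [← tendsto_iff_norm_sub_tendsto_zero] at hconv
  choose a ha using exists_tendsto_coeff_of_tendsto_tsum hdense hnil hc hconv
  have hexists : ∃ k, a k ≠ 0 := by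
    by_contra! hzero
    exact hU (eq_zero_of_tendsto_tsum_of_tendsto_coeff_zero hdense hc hconv
      fun k ↦ hzero k ▸ ha k)
  have hbefore : ∀ k < Nat.find hexists, Tendsto (c · k) l (𝓝 0) := fun k hk ↦
    not_not.mp (Nat.find_min hexists hk) ▸ ha k
  refine ⟨Nat.find hexists, fun k ↦ ⟨a k, ha k⟩,
    ⟨⟨_, norm_pos_iff.mpr (Nat.find_spec hexists), (ha _).norm⟩, hbefore⟩, ?_⟩
  simp only [add_comm (Nat.find hexists)]
  rw [← tendsto_iff_norm_sub_tendsto_zero]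
  refine tendsto_tsum_nat_add hc (fun k hk ↦ ?_) hconv
  simpa only [zero_smul] using (hbefore k hk).smul_const (B ^ (k + 1))

end OperatorSeries

/-- (Indices are 0-based: the coefficient `lam m k` multiplies `B_w^{k+1}`,
matching the paper's `λ_k^m B_w^k` for `k ≥ 1`; the tail `Σ_{k ≥ k₀} λ_k^m B_w^k` becomes
`Σ_k lam m (k₀ + k) • B_w^{k₀+k+1}`.)  Suppose `T_{lam m} → U ≠ 0` in operator norm.
Then there is `k₀` such that: (A3) `(lam m k)ₘ` converges for each `k`;
(B3) `limₘ |lam m k₀| > 0` and `limₘ lam m k = 0` for every `k < k₀`; and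
(C3) `‖Σ_{k ≥ k₀} lam m k • B_wᵏ − U‖ → 0`. -/
theorem exists_first_nonvanishing_limit_coefficient
    {𝕜 : Type*} [RCLike 𝕜] {X : Type*} [NormedAddCommGroup X] [NormedSpace 𝕜 X]
    [CompleteSpace X]
    (x : ℕ → X) (xs : ℕ → X →L[𝕜] 𝕜) (C : ℝ)
    (hx : ∀ n, ‖x n‖ = 1)
    (hxs : ∀ n, ‖xs n‖ ≤ C)
    (hbi : ∀ m n, xs m (x n) = if m = n then 1 else 0)
    (hdense : Dense (Submodule.span 𝕜 (Set.range x) : Set X))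
    (hsep : ∀ z : X, (∀ n, xs n z = 0) → z = 0)
    (w : ℕ → ℝ)
    (hw_pos : ∀ n, 0 < w n)
    (hw_anti : StrictAnti w)
    (hw_lim : Tendsto w atTop (nhds 0))
    (hw_sum : Summable w)
    (hw_le : ∑' n, w n ≤ C⁻¹)
    (B : X →L[𝕜] X)
    (hB : ∀ z : X, B z = ∑' n : ℕ, ((w n : 𝕜) * xs (n + 1) z) • x n)
    (lam : ℕ → lp (fun _ : ℕ => 𝕜) 1)
    (U : X →L[𝕜] X) (hU : U ≠ 0)
    (hconv : Tendsto
      (fun m => ‖(∑' k : ℕ, (lam m k : 𝕜) • B ^ (k + 1)) - U‖) atTop (nhds 0)) :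
    ∃ k₀ : ℕ,
      (∀ k : ℕ, ∃ L : 𝕜, Tendsto (fun m => (lam m k : 𝕜)) atTop (nhds L)) ∧
      ((∃ L : ℝ, 0 < L ∧ Tendsto (fun m => ‖(lam m k₀ : 𝕜)‖) atTop (nhds L)) ∧
        ∀ k < k₀, Tendsto (fun m => (lam m k : 𝕜)) atTop (nhds (0 : 𝕜))) ∧
      Tendsto
        (fun m => ‖(∑' k : ℕ, (lam m (k₀ + k) : 𝕜) • B ^ (k₀ + k + 1)) - U‖)
        atTop (nhds 0) := by
  have hshift := IsWeightedBackwardShift.of_biorthogonal (f := B.toLinearMap) hbi hB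
  have hw_norm : (fun n ↦ ‖(w n : 𝕜)‖) = w :=
    funext fun n ↦ RCLike.norm_of_nonneg (hw_pos n).le
  have hB_norm : ‖B‖ ≤ 1 := calc
    ‖B‖ ≤ (∑' n, ‖(w n : 𝕜)‖) * C :=
      opNorm_le_of_apply_eq_tsum (fun n ↦ (hx n).le) (fun n ↦ hxs (n + 1)) (by rwa [hw_norm]) hB
    _ ≤ C⁻¹ * C := by rw [hw_norm]; gcongr; exact (norm_nonneg _).trans (hxs 0)
    _ ≤ 1 := inv_mul_le_one
  have hlam : ∀ m, Summable fun k ↦ ‖lam m k‖ := fun m ↦ by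
    simpa using (lp.memℓp (lam m)).summable (by simp)
  have hx₀ : x 0 ≠ 0 := norm_ne_zero_iff.mp (by rw [hx]; exact one_ne_zero)
  have hnil : ¬IsNilpotent B := fun h ↦
    hshift.not_isNilpotent (fun n ↦ RCLike.ofReal_ne_zero.mpr (hw_pos n).ne') hx₀
      (h.map ContinuousLinearMap.toLinearMapRingHom)
  exact exists_first_nonvanishing_limit_coefficient_general
    (hdense.mono hshift.span_le_maxGenEigenspace_zero) hnil
    (fun m ↦ summable_smul_pow_succ (hlam m) hB_norm) hU hconv
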